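/- Let V and W be 4-dimensional subspaces of ℝ⁸, each closed under the triple cross product (X(a,b,c) ∈ V for all a, b, c ∈ V, and likewise for W). Then dim(V ∩ W) ≠ 3. -/

import Mathlib

noncomputable section

/-- ℝ⁸ with coordinates (x₁,x₂,x₃,x₄,y₁,y₂,y₃,y₄) indexed 0,…,7. -/
abbrev V8 := Fin 8 → ℝ

/-- Standard basis vector. -/
def e8 (k : Fin 8) : V8 := fun j => if j = k then 1 else 0

/-- The wedge of four coordinate 1-forms, `(e^p ∧ e^q ∧ e^r ∧ e^s)(a,b,c,d)`. -/
def form4 (p q r s : Fin 8) (a b c d : V8) : ℝ :=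
  Matrix.det !![a p, a q, a r, a s; b p, b q, b r, b s;
                c p, c q, c r, c s; d p, d q, d r, d s]

/-- The Spin(7) 4-form
Φ = e¹∧e²∧e³∧e⁴ + (e¹∧e² − e³∧e⁴)∧(f¹∧f² − f³∧f⁴)
  + (e¹∧e³ − e⁴∧e²)∧(f¹∧f³ − f⁴∧f²) + (e¹∧e⁴ − e²∧e³)∧(f¹∧f⁴ − f²∧f³)
  + f¹∧f²∧f³∧f⁴,
with e¹,…,e⁴,f¹,…,f⁴ the coordinate 1-forms indexed 0,1,2,3,4,5,6,7. -/
def Phi8 (a b c d : V8) : ℝ :=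
  form4 0 1 2 3 a b c d
    + (form4 0 1 4 5 a b c d - form4 0 1 6 7 a b c d
        - form4 2 3 4 5 a b c d + form4 2 3 6 7 a b c d)
    + (form4 0 2 4 6 a b c d - form4 0 2 7 5 a b c d
        - form4 3 1 4 6 a b c d + form4 3 1 7 5 a b c d)
    + (form4 0 3 4 7 a b c d - form4 0 3 5 6 a b c d
        - form4 1 2 4 7 a b c d + form4 1 2 5 6 a b c d)
    + form4 4 5 6 7 a b c d

/-- The triple cross product, characterized by ⟨X(u,v,w), z⟩ = Φ(u,v,w,z)
    for the standard inner product; its k-th coordinate is Φ(u,v,w,eₖ). -/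
def X8 (a b c : V8) : V8 := fun k => Phi8 a b c (e8 k)

/-- The standard inner product on ℝ⁸. -/
def dot8 (a b : V8) : ℝ := ∑ k, a k * b k


theorem form4_eq (p q r s : Fin 8) (a b c d : V8) : form4 p q r s a b c d =
    (a p * b q - a q * b p) * (c r * d s - c s * d r)
    - (a p * b r - a r * b p) * (c q * d s - c s * d q)
    + (a p * b s - a s * b p) * (c q * d r - c r * d q)
    + (a q * b r - a r * b q) * (c p * d s - c s * d p)
    - (a q * b s - a s * b q) * (c p * d r - c r * d p)
    + (a r * b s - a s * b r) * (c p * d q - c q * d p) := by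
  unfold form4
  simp [Matrix.det_succ_row_zero, Fin.sum_univ_succ, Fin.succAbove]
  ring

theorem form4_dot (p q r s : Fin 8) (a b c d : V8) :
    ∑ k, form4 p q r s a b c (e8 k) * d k = form4 p q r s a b c d := by
  have h : ∀ (i : Fin 8), ∑ k, e8 k i * d k = d i := by
    intro i; simp [e8]
  simp only [form4_eq]
  rw [← h p, ← h q, ← h r, ← h s]
  simp only [Fin.sum_univ_eight]
  ring

theorem X8_dot (a b c d : V8) : dot8 (X8 a b c) d = Phi8 a b c d := by
  unfold dot8 X8 Phi8
  simp only [add_mul, sub_mul, Finset.sum_add_distrib, Finset.sum_sub_distrib, form4_dot]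

theorem Phi8_a (a b c : V8) : Phi8 a b c a = 0 := by
  simp only [Phi8, form4_eq]; ring
theorem Phi8_b (a b c : V8) : Phi8 a b c b = 0 := by
  simp only [Phi8, form4_eq]; ring
theorem Phi8_c (a b c : V8) : Phi8 a b c c = 0 := by
  simp only [Phi8, form4_eq]; ring

set_option maxHeartbeats 0 in
theorem X8_norm (a b c : V8) : dot8 (X8 a b c) (X8 a b c) =
    dot8 a a * (dot8 b b * dot8 c c - dot8 b c * dot8 b c)
    - dot8 a b * (dot8 a b * dot8 c c - dot8 b c * dot8 a c)
    + dot8 a c * (dot8 a b * dot8 b c - dot8 b b * dot8 a c) := by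
  simp only [dot8, X8, Phi8, form4_eq, Fin.sum_univ_eight]
  simp only [e8, Fin.reduceEq, if_true, if_false, mul_one, mul_zero, sub_zero, zero_sub, add_zero, zero_add, sub_self]
  generalize a 0 = a0
  generalize a 1 = a1
  generalize a 2 = a2
  generalize a 3 = a3
  generalize a 4 = a4
  generalize a 5 = a5
  generalize a 6 = a6
  generalize a 7 = a7
  generalize b 0 = b0
  generalize b 1 = b1
  generalize b 2 = b2
  generalize b 3 = b3
  generalize b 4 = b4
  generalize b 5 = b5
  generalize b 6 = b6
  generalize b 7 = b7
  generalize c 0 = c0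
  generalize c 1 = c1
  generalize c 2 = c2
  generalize c 3 = c3
  generalize c 4 = c4
  generalize c 5 = c5
  generalize c 6 = c6
  generalize c 7 = c7
  ring

theorem dot8_self_eq_zero {v : V8} (h : dot8 v v = 0) : v = 0 := by
  unfold dot8 at h
  rw [Finset.sum_eq_zero_iff_of_nonneg (fun i _ => mul_self_nonneg _)] at h
  funext i
  exact mul_self_eq_zero.mp (h i (Finset.mem_univ i))

theorem dot8_comm (a b : V8) : dot8 a b = dot8 b a := by
  simp [dot8, mul_comm]

theorem dot8_comb (x a b c : V8) (s t u : ℝ) :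
    dot8 x (s • a + t • b + u • c) = s * dot8 x a + t * dot8 x b + u * dot8 x c := by
  simp [dot8, Fin.sum_univ_eight]; ring

/-- two Cayley 4-planes in ℝ⁸ (4-dimensional subspaces closed
    under the triple cross product) cannot intersect in dimension 3. -/
theorem stmt17 (V W : Submodule ℝ V8)
    (hV4 : Module.finrank ℝ V = 4) (hW4 : Module.finrank ℝ W = 4)
    (hV : ∀ a ∈ V, ∀ b ∈ V, ∀ c ∈ V, X8 a b c ∈ V)
    (hW : ∀ a ∈ W, ∀ b ∈ W, ∀ c ∈ W, X8 a b c ∈ W) :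
    Module.finrank ℝ ↥(V ⊓ W) ≠ 3 := by
  intro h3
  let B := Module.finBasisOfFinrankEq ℝ ↥(V ⊓ W) h3
  obtain ⟨a, ha⟩ : ∃ a, a = B 0 := ⟨_, rfl⟩
  obtain ⟨b, hb⟩ : ∃ b, b = B 1 := ⟨_, rfl⟩
  obtain ⟨c, hc⟩ : ∃ c, c = B 2 := ⟨_, rfl⟩
  have hXm : X8 a b c ∈ V ⊓ W :=
    ⟨hV _ a.2.1 _ b.2.1 _ c.2.1, hW _ a.2.2 _ b.2.2 _ c.2.2⟩
  have hrep := B.sum_repr ⟨_, hXm⟩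
  rw [Fin.sum_univ_three, ← ha, ← hb, ← hc] at hrep
  have hrep' := congrArg Subtype.val hrep
  simp only [Submodule.coe_add, Submodule.coe_smul] at hrep'
  have hX0 : dot8 (X8 a b c) (X8 a b c) = 0 := by
    conv_lhs => rw [← hrep', hrep']
    conv_lhs => arg 2; rw [← hrep']
    rw [dot8_comb, X8_dot, X8_dot, X8_dot, Phi8_a, Phi8_b, Phi8_c]
    simp
  rw [X8_norm] at hX0
  let G : Matrix (Fin 3) (Fin 3) ℝ :=
    !![dot8 a a, dot8 a b, dot8 a c; dot8 a b, dot8 b b, dot8 b c; dot8 a c, dot8 b c, dot8 c c]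
  have hG : G.det = 0 := by
    rw [Matrix.det_fin_three, ← hX0]
    simp [G]; ring
  obtain ⟨v, hv0, hv⟩ := Matrix.exists_mulVec_eq_zero_iff.mpr hG
  have e0 := congrFun hv 0
  have e1 := congrFun hv 1
  have e2 := congrFun hv 2
  simp [G, Matrix.mulVec, dotProduct, Fin.sum_univ_three] at e0 e1 e2
  have hz : dot8 (v 0 • (a : V8) + v 1 • (b : V8) + v 2 • (c : V8))
      (v 0 • (a : V8) + v 1 • (b : V8) + v 2 • (c : V8)) = 0 := by
    rw [dot8_comb, dot8_comm _ (a : V8), dot8_comm _ (b : V8), dot8_comm _ (c : V8),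
      dot8_comb, dot8_comb, dot8_comb, dot8_comm b a, dot8_comm c a, dot8_comm c b]
    linear_combination v 0 * e0 + v 1 * e1 + v 2 * e2
  have hz' := dot8_self_eq_zero hz
  have hli := Fintype.linearIndependent_iff.mp B.linearIndependent v (by
    rw [Fin.sum_univ_three, ← ha, ← hb, ← hc]
    exact Subtype.ext hz')
  exact hv0 (funext hli)
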